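/- Let ε ∈ {1, −1}, let Ω ⊆ ℂ ∖ {0} be open, and let u : Ω → ℂ be a holomorphic solution of the Boutroux form of PII, ü = 2u³ + u + 2α/(3z) − u̇/z + u/(9z²), with parameter α ∈ ℂ. Suppose D(z) := 3z·u(z)² + ε·u(z) + 3εz·u̇(z) + 3z/2 ≠ 0 for all z ∈ Ω. Then ū(z) := −u(z) − (2α + ε)/D(z) is a holomorphic solution on Ω of the Boutroux form of PII with parameter α + ε. -/

import Mathlib

/-- Bäcklund transformation of the Boutroux form of PII: if `u` is a holomorphic
solution of `ü = 2u³ + u + 2α/(3z) - u̇/z + u/(9z²)` on an open set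
`Ω ⊆ ℂ ∖ {0}`, `ε = ±1`, and `D = 3zu² + εu + 3εz·u̇ + 3z/2` is nowhere zero on
`Ω`, then `ū = -u - (2α + ε)/D` is a holomorphic solution on `Ω` of the Boutroux
form of PII with parameter `α + ε`. -/
theorem backlund_boutroux_painleveII
    (ε : ℂ) (hε : ε = 1 ∨ ε = -1) (Ω : Set ℂ) (hΩ : IsOpen Ω)
    (hΩ0 : ∀ z ∈ Ω, z ≠ 0) (α : ℂ)
    (u : ℂ → ℂ) (hu : DifferentiableOn ℂ u Ω)
    (hueq : ∀ z ∈ Ω, HasDerivAt (deriv u)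
      (2 * u z ^ 3 + u z + 2 * α / (3 * z) - deriv u z / z + u z / (9 * z ^ 2)) z)
    (hD : ∀ z ∈ Ω,
      3 * z * u z ^ 2 + ε * u z + 3 * ε * z * deriv u z + 3 * z / 2 ≠ 0) :
    DifferentiableOn ℂ
        (fun z => -u z - (2 * α + ε) /
          (3 * z * u z ^ 2 + ε * u z + 3 * ε * z * deriv u z + 3 * z / 2)) Ω ∧
      ∀ z ∈ Ω,
        HasDerivAt
          (deriv fun z => -u z - (2 * α + ε) /
            (3 * z * u z ^ 2 + ε * u z + 3 * ε * z * deriv u z + 3 * z / 2))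
          (2 * (-u z - (2 * α + ε) /
              (3 * z * u z ^ 2 + ε * u z + 3 * ε * z * deriv u z + 3 * z / 2)) ^ 3
            + (-u z - (2 * α + ε) /
              (3 * z * u z ^ 2 + ε * u z + 3 * ε * z * deriv u z + 3 * z / 2))
            + 2 * (α + ε) / (3 * z)
            - deriv (fun z => -u z - (2 * α + ε) /
              (3 * z * u z ^ 2 + ε * u z + 3 * ε * z * deriv u z + 3 * z / 2)) z / z
            + (-u z - (2 * α + ε) /
              (3 * z * u z ^ 2 + ε * u z + 3 * ε * z * deriv u z + 3 * z / 2))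
              / (9 * z ^ 2)) z := by
  have he2 : ε ^ 2 = 1 := by rcases hε with h | h <;> simp [h]
  have hu1 : ∀ z ∈ Ω, HasDerivAt u (deriv u z) z := fun z hz =>
    (hu.differentiableAt (hΩ.mem_nhds hz)).hasDerivAt
  set q : ℂ → ℂ := fun z => (2 * α + ε) /
    (3 * z * u z ^ 2 + ε * u z + 3 * ε * z * deriv u z + 3 * z / 2) with hq
  have hqD : ∀ z ∈ Ω, q z * (3 * z * u z ^ 2 + ε * u z + 3 * ε * z * deriv u z + 3 * z / 2)
      = 2 * α + ε := fun z hz => div_mul_cancel₀ _ (hD z hz)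
  -- the first-order (Riccati) equation satisfied by `q`
  have hq1 : ∀ z ∈ Ω, HasDerivAt q
      (-(2 * ε * u z + 1 / (3 * z)) * q z - ε * q z ^ 2) z := by
    intro z hz
    have hz0 := hΩ0 z hz
    have hDz := hD z hz
    have h1 := hu1 z hz
    have hid := hasDerivAt_id' z
    have hDd := ((((hid.const_mul 3).mul (h1.pow 2)).add (h1.const_mul ε)).add
      ((hid.const_mul (3 * ε)).mul (hueq z hz))).add ((hid.const_mul 3).div_const 2)
    have hDd2 : HasDerivAt
        (fun z => 3 * z * u z ^ 2 + ε * u z + 3 * ε * z * deriv u z + 3 * z / 2)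
        ((2 * ε * u z + 1 / (3 * z)) *
          (3 * z * u z ^ 2 + ε * u z + 3 * ε * z * deriv u z + 3 * z / 2)
          + ε * (2 * α + ε)) z := by
      refine hDd.congr_deriv ?_
      simp only [Pi.pow_apply]
      field_simp
      rcases hε with h | h <;> subst h <;> push_cast <;> ring
    refine ((hasDerivAt_const z (2 * α + ε)).div hDd2 hDz).congr_deriv ?_
    simp only [hq]
    generalize 3 * z * u z ^ 2 + ε * u z + 3 * ε * z * deriv u z + 3 * z / 2 = D at hDz
    field_simp
    ring
  have hw1 : ∀ z ∈ Ω, HasDerivAt (fun z => -u z - q z)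
      (-deriv u z - (-(2 * ε * u z + 1 / (3 * z)) * q z - ε * q z ^ 2)) z :=
    fun z hz => (hu1 z hz).neg.sub (hq1 z hz)
  refine ⟨fun z hz => (hw1 z hz).differentiableAt.differentiableWithinAt, fun z hz => ?_⟩
  change HasDerivAt (deriv fun z => -u z - q z)
    (2 * (-u z - q z) ^ 3 + (-u z - q z) + 2 * (α + ε) / (3 * z)
      - deriv (fun z => -u z - q z) z / z + (-u z - q z) / (9 * z ^ 2)) z
  have hz0 := hΩ0 z hz
  have hev : (deriv fun z => -u z - q z) =ᶠ[nhds z] fun z =>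
      -deriv u z - (-(2 * ε * u z + 1 / (3 * z)) * q z - ε * q z ^ 2) := by
    filter_upwards [hΩ.mem_nhds hz] with y hy using (hw1 y hy).deriv
  rw [(hw1 z hz).deriv]
  refine HasDerivAt.congr_of_eventuallyEq ?_ hev
  have h3z : (3 * z : ℂ) ≠ 0 := mul_ne_zero three_ne_zero hz0
  have hid := hasDerivAt_id' z
  have hA := (((hu1 z hz).const_mul (2 * ε)).add
    ((hasDerivAt_const z (1 : ℂ)).div (hid.const_mul 3) h3z)).neg
  have hB := (hueq z hz).neg.sub
    ((hA.mul (hq1 z hz)).sub (((hq1 z hz).pow 2).const_mul ε))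
  refine hB.congr_deriv ?_
  simp only [Pi.pow_apply, Pi.add_apply, Pi.neg_apply, Pi.div_apply]
  have hQ := hqD z hz
  generalize q z = Q at hQ ⊢
  generalize deriv u z = v at hQ ⊢
  generalize u z = w at hQ ⊢
  have hα : α = (Q * (3 * z * w ^ 2 + ε * w + 3 * ε * z * v + 3 * z / 2) - ε) / 2 := by
    rw [hQ]; ring
  rw [hα]
  rcases hε with h | h <;> subst h <;> field_simp <;> push_cast <;> ring
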